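/- arXiv:2205.03637 — 4 statements merged into one kernel-verified Lean document; each statement's English description precedes it below -/
import Mathlib

section
/- Let k, l, m be integers satisfying k² + l² − m² = 1 (an integral point on the unit hyperboloid AdS₂ embedded in Minkowski space 𝓜^{2,1} with metric diag(1,1,−1)). Then for every integer b, the triple (x₀, x₁, x₂) = (k + b(km − l), l + b(k + lm), m + b(1 + m²)) satisfies x₀² + x₁² − x₂² = 1, satisfies the light-cone line equations (1 + m²)·x₀ = (k + lm) − x₂·(l − mk) and (1 + m²)·x₁ = (l − mk) + x₂·(k + lm), and the map b ↦ (x₀, x₁, x₂) is injective. In particular, the light-cone line through (k, l, m) contains infinitely many integral points of the hyperboloid. -/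
/-- For an integral point `(k, l, m)` on the hyperboloid
`k² + l² − m² = 1` (AdS₂ in `𝓜^{2,1}` with metric `diag(1,1,−1)`), every integer `b`
yields an integral point `(k + b(km − l), l + b(k + lm), m + b(1 + m²))` on the
hyperboloid which lies on the light-cone line through `(k, l, m)`; the map
`b ↦ (x₀, x₁, x₂)` is injective, hence the light-cone line contains infinitely many
integral points of the hyperboloid. -/
theorem statement0 (k l m : ℤ) (h : k ^ 2 + l ^ 2 - m ^ 2 = 1) :
    (∀ b : ℤ,
      (k + b * (k * m - l)) ^ 2 + (l + b * (k + l * m)) ^ 2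
          - (m + b * (1 + m ^ 2)) ^ 2 = 1 ∧
      (1 + m ^ 2) * (k + b * (k * m - l))
          = (k + l * m) - (m + b * (1 + m ^ 2)) * (l - m * k) ∧
      (1 + m ^ 2) * (l + b * (k + l * m))
          = (l - m * k) + (m + b * (1 + m ^ 2)) * (k + l * m)) ∧
    Function.Injective (fun b : ℤ =>
      (k + b * (k * m - l), l + b * (k + l * m), m + b * (1 + m ^ 2))) ∧
    Set.Infinite {p : ℤ × ℤ × ℤ |
      p.1 ^ 2 + p.2.1 ^ 2 - p.2.2 ^ 2 = 1 ∧
      (1 + m ^ 2) * p.1 = (k + l * m) - p.2.2 * (l - m * k) ∧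
      (1 + m ^ 2) * p.2.1 = (l - m * k) + p.2.2 * (k + l * m)} := by
  have on_line : ∀ b : ℤ,
      (k + b * (k * m - l)) ^ 2 + (l + b * (k + l * m)) ^ 2
          - (m + b * (1 + m ^ 2)) ^ 2 = 1 ∧
      (1 + m ^ 2) * (k + b * (k * m - l))
          = (k + l * m) - (m + b * (1 + m ^ 2)) * (l - m * k) ∧
      (1 + m ^ 2) * (l + b * (k + l * m))
          = (l - m * k) + (m + b * (1 + m ^ 2)) * (k + l * m) := by
    intro b
    refine ⟨?_, by ring, by ring⟩
    linear_combination (1 + 2 * b * m + b ^ 2 * (1 + m ^ 2)) * h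
  have injective : Function.Injective (fun b : ℤ =>
      (k + b * (k * m - l), l + b * (k + l * m), m + b * (1 + m ^ 2))) := by
    intro a b hab
    have hm : (1 + m ^ 2 : ℤ) ≠ 0 := by positivity
    simp only [Prod.mk.injEq] at hab
    exact mul_right_cancel₀ hm (add_left_cancel hab.2.2)
  exact ⟨on_line, injective, Set.infinite_of_injective_forall_mem injective on_line⟩
end

section
/- Let a, b be coprime integers, not both zero. Then there exist infinitely many integer triples (x₀, x₁, x₂) such that x₀² + x₁² − x₂² = 1 and (a² + b²)·x₀ = (a² − b²) − 2ab·x₂ and (a² + b²)·x₁ = 2ab + (a² − b²)·x₂. That is, the light-cone line emanating from the rational point ((a² − b²)/(a² + b²), 2ab/(a² + b²)) of the throat circle of AdS₂ contains infinitely many integral points. -/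
/-- A Bézout relation `u a + v b = 1` yields the integral point
`((a + ib)(u + iv), a v - b u)` on the light-cone line attached to `(a, b)`. -/
theorem bezout_point_mem_lightCone_line {a b u v : ℤ} (h : u * a + v * b = 1) :
    (a * u - b * v) ^ 2 + (a * v + b * u) ^ 2 - (a * v - b * u) ^ 2 = 1 ∧
    (a ^ 2 + b ^ 2) * (a * u - b * v) = (a ^ 2 - b ^ 2) - 2 * a * b * (a * v - b * u) ∧
    (a ^ 2 + b ^ 2) * (a * v + b * u) = 2 * a * b + (a ^ 2 - b ^ 2) * (a * v - b * u) := by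
  refine ⟨?_, ?_, ?_⟩
  · linear_combination (u * a + v * b + 1) * h
  · linear_combination (a ^ 2 - b ^ 2) * h
  · linear_combination 2 * a * b * h

/-- For coprime integers `a, b`, not both zero, the light-cone line
emanating from the rational point `((a² − b²)/(a² + b²), 2ab/(a² + b²))` of the throat
circle contains infinitely many integral points of the hyperboloid
`x₀² + x₁² − x₂² = 1`. -/
theorem statement5 (a b : ℤ) (hco : IsCoprime a b) (hne : ¬(a = 0 ∧ b = 0)) :
    Set.Infinite {p : ℤ × ℤ × ℤ |
      p.1 ^ 2 + p.2.1 ^ 2 - p.2.2 ^ 2 = 1 ∧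
      (a ^ 2 + b ^ 2) * p.1 = (a ^ 2 - b ^ 2) - 2 * a * b * p.2.2 ∧
      (a ^ 2 + b ^ 2) * p.2.1 = 2 * a * b + (a ^ 2 - b ^ 2) * p.2.2} := by
  obtain ⟨u, v, h⟩ := hco
  have hN : a ^ 2 + b ^ 2 ≠ 0 := fun h0 =>
    hne ⟨by nlinarith [sq_nonneg a, sq_nonneg b], by nlinarith [sq_nonneg a, sq_nonneg b]⟩
  refine Set.infinite_of_injective_forall_mem (f := fun t : ℤ =>
    (a * (u + b * t) - b * (v - a * t), a * (v - a * t) + b * (u + b * t),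
      a * (v - a * t) - b * (u + b * t))) ?_ fun t =>
    bezout_point_mem_lightCone_line (by linear_combination h)
  intro s t hst
  simp only [Prod.mk.injEq] at hst
  exact mul_left_cancel₀ hN (by linear_combination -hst.2.2)
end

section
/- Let k ≥ 1 be an integer and (gₙ) the k-Fibonacci sequence. Then for every integer l ≥ 1 and every n ≥ 0, g_{n+2l} ≡ (−1)^l · gₙ (mod g_l). In particular, the k-Fibonacci sequence reduced modulo g_l is periodic with period dividing 2l when l is even and dividing 4l when l is odd, generalizing the Falk–Dyson result for the Fibonacci sequence. -/
/-- The k-Fibonacci sequence: `g₀ = 0`, `g₁ = 1`, `g_{n+2} = k·g_{n+1} + gₙ`. -/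
def kfib (k : ℕ) : ℕ → ℕ
  | 0 => 0
  | 1 => 1
  | n + 2 => k * kfib k (n + 1) + kfib k n

/-- The addition formula for the k-Fibonacci sequence. -/
theorem kfib_add_succ (k l n : ℕ) :
    kfib k (n + 1 + l) = kfib k (n + 1) * kfib k (l + 1) + kfib k n * kfib k l := by
  induction l generalizing n with
  | zero => simp [kfib]
  | succ l ih =>
    rw [show n + 1 + (l + 1) = n + 1 + 1 + l by ring, ih (n + 1)]
    simp only [kfib]
    ring

/-- Cassini's identity for the k-Fibonacci sequence. -/
theorem kfib_cassini (k l : ℕ) :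
    (kfib k (l + 1) : ℤ) ^ 2 - k * kfib k l * kfib k (l + 1) - (kfib k l : ℤ) ^ 2
      = (-1) ^ l := by
  induction l with
  | zero => simp [kfib]
  | succ l ih =>
    rw [pow_succ (-1 : ℤ), ← ih]
    simp only [kfib]
    push_cast
    ring

theorem kfib_add_modEq (k l n : ℕ) :
    (kfib k (n + l) : ℤ) ≡ kfib k (l + 1) * kfib k n [ZMOD kfib k l] := by
  cases n with
  | zero => simp [kfib]
  | succ n =>
    rw [kfib_add_succ, Int.modEq_iff_dvd]
    exact ⟨-kfib k n, by push_cast; ring⟩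

theorem kfib_succ_sq_modEq (k l : ℕ) :
    (kfib k (l + 1) : ℤ) ^ 2 ≡ (-1) ^ l [ZMOD kfib k l] := by
  rw [← kfib_cassini k l, Int.modEq_iff_dvd]
  exact ⟨-(k * kfib k (l + 1) + kfib k l), by ring⟩

theorem kfib_add_two_mul_modEq (k l n : ℕ) :
    (kfib k (n + 2 * l) : ℤ) ≡ (-1) ^ l * kfib k n [ZMOD kfib k l] := by
  rw [show n + 2 * l = n + l + l by ring]
  calc (kfib k (n + l + l) : ℤ)
      ≡ kfib k (l + 1) * kfib k (n + l) [ZMOD kfib k l] := kfib_add_modEq k l (n + l)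
    _ ≡ kfib k (l + 1) * (kfib k (l + 1) * kfib k n) [ZMOD kfib k l] :=
      (kfib_add_modEq k l n).mul_left _
    _ = (kfib k (l + 1) : ℤ) ^ 2 * kfib k n := by ring
    _ ≡ (-1) ^ l * kfib k n [ZMOD kfib k l] := (kfib_succ_sq_modEq k l).mul_right _

/-- For every `l ≥ 1` and `n ≥ 0`,
`g_{n+2l} ≡ (−1)^l · gₙ (mod g_l)`; in particular the k-Fibonacci sequence mod `g_l`
is periodic with period dividing `2l` for even `l` and dividing `4l` for odd `l`. -/
theorem statement18 (k : ℕ) (hk : 1 ≤ k) (l : ℕ) (hl : 1 ≤ l) :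
    (∀ n : ℕ, (kfib k (n + 2 * l) : ℤ)
        ≡ (-1 : ℤ) ^ l * (kfib k n : ℤ) [ZMOD (kfib k l : ℤ)]) ∧
    (Even l → ∀ n : ℕ, kfib k (n + 2 * l) ≡ kfib k n [MOD kfib k l]) ∧
    (Odd l → ∀ n : ℕ, kfib k (n + 4 * l) ≡ kfib k n [MOD kfib k l]) := by
  refine ⟨kfib_add_two_mul_modEq k l, fun he n => ?_, fun ho n => ?_⟩
  · rw [← Int.natCast_modEq_iff]
    simpa [he.neg_one_pow] using kfib_add_two_mul_modEq k l n
  · rw [← Int.natCast_modEq_iff, show n + 4 * l = n + 2 * l + 2 * l by ring]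
    have h := (kfib_add_two_mul_modEq k l (n + 2 * l)).trans
      ((kfib_add_two_mul_modEq k l n).mul_left _)
    simpa [ho.neg_one_pow] using h
end

section
/- For every integer l ≥ 1 and every n ≥ 0, fib(n + 2l) ≡ (−1)^l · fib(n) (mod fib(l)). In particular, the Fibonacci sequence reduced modulo fib(l) is periodic with period dividing 2l when l is even and dividing 4l when l is odd (the Falk–Dyson result). -/
/-- A form of Cassini's identity involving only two consecutive Fibonacci numbers. -/
theorem fib_succ_sq_sub (l : ℕ) :
    (Nat.fib (l + 1) : ℤ) ^ 2 - Nat.fib l * (Nat.fib (l + 1) + Nat.fib l) = (-1) ^ l := by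
  induction l with
  | zero => simp
  | succ k ih =>
    rw [Nat.fib_add_two, pow_succ (-1 : ℤ), ← ih]
    push_cast
    ring

theorem fib_succ_sq_modEq (l : ℕ) :
    (Nat.fib (l + 1) : ℤ) ^ 2 ≡ (-1) ^ l [ZMOD (Nat.fib l : ℤ)] := by
  refine (Int.modEq_iff_dvd.2 ⟨Nat.fib (l + 1) + Nat.fib l, ?_⟩).symm
  linarith [fib_succ_sq_sub l]

theorem fib_add_modEq (l n : ℕ) :
    (Nat.fib (n + l) : ℤ) ≡ Nat.fib n * Nat.fib (l + 1) [ZMOD (Nat.fib l : ℤ)] := by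
  cases n with
  | zero => simp
  | succ k =>
    refine (Int.modEq_iff_dvd.2 ⟨Nat.fib k, ?_⟩).symm
    rw [Nat.add_right_comm, Nat.fib_add]
    push_cast
    ring

theorem fib_add_two_mul_modEq (l n : ℕ) :
    (Nat.fib (n + 2 * l) : ℤ) ≡ (-1) ^ l * Nat.fib n [ZMOD (Nat.fib l : ℤ)] := by
  calc (Nat.fib (n + 2 * l) : ℤ)
      = Nat.fib (n + l + l) := by rw [two_mul, add_assoc]
    _ ≡ Nat.fib (n + l) * Nat.fib (l + 1) [ZMOD (Nat.fib l : ℤ)] := fib_add_modEq l (n + l)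
    _ ≡ Nat.fib n * Nat.fib (l + 1) * Nat.fib (l + 1) [ZMOD (Nat.fib l : ℤ)] :=
      (fib_add_modEq l n).mul_right _
    _ = Nat.fib (l + 1) ^ 2 * Nat.fib n := by ring
    _ ≡ (-1) ^ l * Nat.fib n [ZMOD (Nat.fib l : ℤ)] := (fib_succ_sq_modEq l).mul_right _

/-- For every `l ≥ 1` and `n ≥ 0`,
`fib(n + 2l) ≡ (−1)^l · fib(n) (mod fib(l))`; in particular the Fibonacci sequence mod
`fib(l)` is periodic with period dividing `2l` for even `l` and dividing `4l` for odd
`l` (the Falk–Dyson result). -/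
theorem statement19 (l : ℕ) (hl : 1 ≤ l) :
    (∀ n : ℕ, (Nat.fib (n + 2 * l) : ℤ)
        ≡ (-1 : ℤ) ^ l * (Nat.fib n : ℤ) [ZMOD (Nat.fib l : ℤ)]) ∧
    (Even l → ∀ n : ℕ, Nat.fib (n + 2 * l) ≡ Nat.fib n [MOD Nat.fib l]) ∧
    (Odd l → ∀ n : ℕ, Nat.fib (n + 4 * l) ≡ Nat.fib n [MOD Nat.fib l]) := by
  refine ⟨fib_add_two_mul_modEq l, fun h n => ?_, fun h n => ?_⟩
  · simpa [h.neg_one_pow, Int.natCast_modEq_iff] using fib_add_two_mul_modEq l n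
  · have h₁ := fib_add_two_mul_modEq l (n + 2 * l)
    have h₂ := (fib_add_two_mul_modEq l n).neg
    rw [h.neg_one_pow, neg_one_mul] at h₁ h₂
    rw [neg_neg] at h₂
    rw [show n + 4 * l = n + 2 * l + 2 * l by ring]
    exact Int.natCast_modEq_iff.1 (h₁.trans h₂)
end
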